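/- Assume that X is uniformly perfect at the base point a for radii ≥ 1 and that μ is doubling on X, and let q > 0. Then μ̂_q is doubling on (X̂, d̂) if and only if there exist 0 < s < q and C_s > 0 such that μ(B(a,r))/μ(B(a,R)) ≥ C_s (r/R)^s whenever 1 ≤ r ≤ R < ∞. -/

import Mathlib

open Metric Set MeasureTheory Filter
open scoped ENNReal NNReal

noncomputable section

variable {X : Type*}

/-- The quasimetric `d_a` on the sphericalization `X̂ = X ∪ {∞}`, with `none` playing
the role of the point `∞`. -/
noncomputable def sphDist [MetricSpace X] (a : X) : Option X → Option X → ℝ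
  | some x, some y => dist x y / ((1 + dist x a) * (1 + dist y a))
  | some x, none => 1 / (1 + dist x a)
  | none, some y => 1 / (1 + dist y a)
  | none, none => 0

/-- The sum `Σ_{j=1}^k d_a(x_{j-1}, x_j)` along a finite sequence (list) in `X̂`. -/
noncomputable def chainSum [MetricSpace X] (a : X) : List (Option X) → ℝ
  | [] => 0
  | [_] => 0
  | x :: y :: l => sphDist a x y + chainSum a (y :: l)

/-- The sphericalized distance `d̂(x,y) = inf Σ_{j=1}^k d_a(x_{j-1},x_j)`, the infimum
being taken over all finite sequences `x = x_0, x_1, …, x_k = y` in `X̂`. -/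
noncomputable def sphHatDist [MetricSpace X] (a : X) (x y : Option X) : ℝ :=
  sInf {s : ℝ | ∃ L : List (Option X),
    L.head? = some x ∧ L.getLast? = some y ∧ chainSum a L = s}

/-- `d̂(x) = d̂(x,∞) = 1/(1+|x|)` for `x ∈ X`. -/
noncomputable def sphD [MetricSpace X] (a x : X) : ℝ := 1 / (1 + dist x a)

/-- `d̂(x) = d̂(x,∞)` on all of `X̂`, with the convention `d̂(∞) = 0`. -/
noncomputable def sphDhat [MetricSpace X] (a : X) : Option X → ℝ
  | none => 0
  | some x => sphD a x

/-- The sphericalized measure `μ̂_q` on `X̂`: `dμ̂_q(x) = (1+|x|)^{-q} dμ(x)` on `X`,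
and `μ̂_q({∞}) = 0`.  Here `sphMeas a q μ S` is the value `μ̂_q(S)` for `S ⊆ X̂`. -/
noncomputable def sphMeas [MetricSpace X] [MeasurableSpace X] (a : X) (q : ℝ)
    (μ : Measure X) (S : Set (Option X)) : ℝ≥0∞ :=
  ∫⁻ x in (Option.some ⁻¹' S), ENNReal.ofReal (((1 + dist x a) ^ q)⁻¹) ∂μ

section SphericalizedDistance

variable [MetricSpace X] {a : X}

lemma sphDist_nonneg (a : X) (u v : Option X) : 0 ≤ sphDist a u v := by
  rcases u with _ | u <;> rcases v with _ | v <;> simp only [sphDist] <;> positivity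

lemma chainSum_nonneg (a : X) (L : List (Option X)) : 0 ≤ chainSum a L := by
  induction L with
  | nil => simp [chainSum]
  | cons x L ih =>
    cases L with
    | nil => simp [chainSum]
    | cons y L =>
      simp only [chainSum]
      exact add_nonneg (sphDist_nonneg a x y) ih

lemma sphHatDist_le_sphDist (a : X) (x y : Option X) : sphHatDist a x y ≤ sphDist a x y := by
  refine csInf_le ⟨0, ?_⟩ ⟨[x, y], by simp [chainSum]⟩
  rintro _ ⟨L, -, -, rfl⟩
  exact chainSum_nonneg a L

lemma le_add_chainSum {ρ : Option X → ℝ} (h : ∀ u v, ρ v ≤ ρ u + sphDist a u v)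
    (L : List (Option X)) (x y : Option X) (hx : L.head? = some x) (hy : L.getLast? = some y) :
    ρ y ≤ ρ x + chainSum a L := by
  induction L generalizing x with
  | nil => simp at hx
  | cons z L ih =>
    obtain rfl : z = x := by simpa using hx
    cases L with
    | nil =>
      obtain rfl : z = y := by simpa using hy
      simp [chainSum]
    | cons w L =>
      have := ih w (by simp) (by simpa using hy)
      have := h z w
      simp only [chainSum]
      linarith

/-- A function that is `1`-Lipschitz for `d_a` is `1`-Lipschitz for `d̂`. -/
lemma le_add_sphHatDist {ρ : Option X → ℝ} (h : ∀ u v, ρ v ≤ ρ u + sphDist a u v)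
    (x y : Option X) : ρ y ≤ ρ x + sphHatDist a x y := by
  have : ρ y - ρ x ≤ sphHatDist a x y := by
    refine le_csInf ⟨_, [x, y], by simp, by simp, rfl⟩ ?_
    rintro _ ⟨L, hx, hy, rfl⟩
    linarith [le_add_chainSum h L x y hx hy]
  linarith

lemma one_add_dist_pos (x a : X) : 0 < 1 + dist x a := by positivity

lemma sphDist_some_some_le (a x y : X) :
    sphDist a (some x) (some y) ≤ sphD a x + sphD a y := by
  have hx := one_add_dist_pos x a
  have hy := one_add_dist_pos y a
  have h : dist x y ≤ (1 + dist y a) + (1 + dist x a) := by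
    linarith [dist_triangle_right x y a]
  simp only [sphDist, sphD]
  rw [div_add_div _ _ hx.ne' hy.ne', one_mul, mul_one]
  gcongr

lemma sphDhat_le_add_sphDist (a : X) (u v : Option X) :
    sphDhat a v ≤ sphDhat a u + sphDist a u v := by
  rcases u with _ | u <;> rcases v with _ | v <;> simp only [sphDist, sphDhat, sphD]
  · simp
  · simp
  · have := one_add_dist_pos u a
    positivity
  · have hu := one_add_dist_pos u a
    have hv := one_add_dist_pos v a
    have h : dist u a ≤ dist u v + dist v a := dist_triangle u v a
    have e : 1 / (1 + dist u a) + dist u v / ((1 + dist u a) * (1 + dist v a)) - 1 / (1 + dist v a)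
        = (dist u v + dist v a - dist u a) / ((1 + dist u a) * (1 + dist v a)) := by
      field_simp
      ring
    have : 0 ≤ (dist u v + dist v a - dist u a) / ((1 + dist u a) * (1 + dist v a)) :=
      div_nonneg (by linarith) (by positivity)
    linarith

lemma sphDhat_le_add_sphHatDist (a : X) (x y : Option X) :
    sphDhat a y ≤ sphDhat a x + sphHatDist a x y :=
  le_add_sphHatDist (sphDhat_le_add_sphDist a) x y

/-- A truncated multiple of the distance to `x` which is `1`-Lipschitz for `d_a`. -/
def truncDist (a x : X) : Option X → ℝ
  | none => 1 / (4 * (1 + dist x a))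
  | some v => min 1 (dist x v / (1 + dist x a)) / (4 * (1 + dist x a))

lemma truncDist_le (a x : X) (v : Option X) : truncDist a x v ≤ 1 / (4 * (1 + dist x a)) := by
  have := one_add_dist_pos x a
  rcases v with _ | v <;> simp only [truncDist]
  · rfl
  · gcongr
    exact min_le_left _ _

lemma truncDist_some_le (a x v : X) :
    truncDist a x (some v) ≤ dist x v / (4 * (1 + dist x a) ^ 2) := by
  have hT := one_add_dist_pos x a
  calc truncDist a x (some v) ≤ dist x v / (1 + dist x a) / (4 * (1 + dist x a)) := by
        simp only [truncDist]
        gcongr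
        exact min_le_right _ _
    _ = _ := by field_simp

lemma truncDist_le_add_sphDist (a x : X) (u v : Option X) :
    truncDist a x v ≤ truncDist a x u + sphDist a u v := by
  have hT := one_add_dist_pos x a
  rcases u with _ | u
  · exact (truncDist_le a x v).trans (le_add_of_nonneg_right (sphDist_nonneg a _ _))
  rcases le_or_gt (1 + dist x a) (dist x u) with hp | hp
  · have : truncDist a x (some u) = 1 / (4 * (1 + dist x a)) := by
      simp only [truncDist]
      rw [min_eq_left ((one_le_div hT).2 hp)]
    rw [this]
    exact (truncDist_le a x v).trans (le_add_of_nonneg_right (sphDist_nonneg a _ _))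
  have hU := one_add_dist_pos u a
  have hUT : 1 + dist u a ≤ (1 + dist x a) + dist x u := by
    linarith [dist_triangle u x a, dist_comm u x]
  have hρ : truncDist a x (some u) = dist x u / (4 * (1 + dist x a) ^ 2) := by
    simp only [truncDist]
    rw [min_eq_right ((div_le_one hT).2 hp.le)]
    field_simp
  -- the estimate for points `v` far away from `x`
  have key : 1 / (4 * (1 + dist x a)) - dist x u / (4 * (1 + dist x a) ^ 2) ≤
      1 / (1 + dist u a) - 1 / (2 * (1 + dist x a)) := by
    generalize 1 + dist x a = T at *
    generalize 1 + dist u a = U at *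
    generalize dist x u = p at *
    have e1 : 1 / (4 * T) - p / (4 * T ^ 2) = (T - p) / (4 * T ^ 2) := by field_simp
    have e2 : 1 / U - 1 / (2 * T) = (2 * T - U) / (2 * T * U) := by field_simp
    rw [e1, e2]
    calc (T - p) / (4 * T ^ 2) ≤ (2 * T - U) / (4 * T ^ 2) :=
        div_le_div_of_nonneg_right (by linarith) (by positivity)
      _ ≤ (2 * T - U) / (2 * T * U) := by
        apply div_le_div_of_nonneg_left (by linarith) (by positivity)
        nlinarith
  rcases v with _ | v
  · rw [hρ]
    have : 0 ≤ 1 / (2 * (1 + dist x a)) := by positivity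
    simp only [truncDist, sphDist]
    linarith
  have hV := one_add_dist_pos v a
  rcases le_or_gt (1 + dist v a) (2 * (1 + dist x a)) with h | h
  · have h1 := truncDist_some_le a x v
    have h2 : dist x v ≤ dist x u + dist u v := dist_triangle x u v
    have h3 : dist u v / (4 * (1 + dist x a) ^ 2) ≤ sphDist a (some u) (some v) := by
      refine div_le_div_of_nonneg_left dist_nonneg (by positivity) ?_
      nlinarith
    calc truncDist a x (some v) ≤ dist x v / (4 * (1 + dist x a) ^ 2) := h1
      _ ≤ (dist x u + dist u v) / (4 * (1 + dist x a) ^ 2) := by gcongr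
      _ = truncDist a x (some u) + dist u v / (4 * (1 + dist x a) ^ 2) := by rw [hρ, add_div]
      _ ≤ _ := by gcongr
  · have h1 := truncDist_le a x (some v)
    have h2 : 1 / (1 + dist v a) ≤ 1 / (2 * (1 + dist x a)) :=
      one_div_le_one_div_of_le (by positivity) h.le
    have h3 := sphDhat_le_add_sphDist a (some v) (some u)
    have h4 : sphDist a (some v) (some u) = sphDist a (some u) (some v) := by
      simp only [sphDist, dist_comm v u, mul_comm]
    simp only [sphDhat, sphD] at h3
    rw [h4] at h3
    rw [hρ]
    linarith

/-- The quasimetric `d_a` is comparable to the metric `d̂`. -/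
lemma sphDist_le_mul_sphHatDist (a : X) (x y : Option X) :
    sphDist a x y ≤ 12 * sphHatDist a x y := by
  have h1 := sphDhat_le_add_sphHatDist a x y
  rcases x with _ | x
  · rcases y with _ | y
    · simp only [sphDist, sphDhat] at *
      linarith
    · have : 0 ≤ sphDhat a (some y) := by simp only [sphDhat, sphD]; positivity
      simp only [sphDist, sphDhat, sphD] at *
      linarith
  have hT := one_add_dist_pos x a
  have h2 := le_add_sphHatDist (truncDist_le_add_sphDist a x) (some x) y
  have h0 : truncDist a x (some x) = 0 := by simp [truncDist]
  rw [h0, zero_add] at h2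
  have hq : 1 / (4 * (1 + dist x a)) = sphD a x / 4 := by simp only [sphD]; field_simp
  have hD : 0 < sphD a x := by simp only [sphD]; positivity
  rcases y with _ | y
  · simp only [truncDist] at h2
    have : sphDist a (some x) none = sphD a x := rfl
    linarith
  have hV := one_add_dist_pos y a
  have hsum := sphDist_some_some_le a x y
  simp only [sphDhat] at h1
  rcases le_or_gt (sphD a y) (2 * sphD a x) with h | h
  · simp only [truncDist] at h2
    rcases le_total 1 (dist x y / (1 + dist x a)) with h' | h'
    · rw [min_eq_left h'] at h2
      linarith
    · rw [min_eq_right h'] at h2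
      have e1 : sphDist a (some x) (some y) = dist x y * sphD a x * sphD a y := by
        simp only [sphDist, sphD]; field_simp
      have e2 : dist x y / (1 + dist x a) / (4 * (1 + dist x a)) =
          dist x y * sphD a x * sphD a x / 4 := by
        simp only [sphD]; field_simp
      have e3 : dist x y * sphD a x * sphD a y ≤ dist x y * sphD a x * (2 * sphD a x) := by
        gcongr
      have e4 : 0 ≤ dist x y * sphD a x * sphD a x := by positivity
      linarith
  · linarith

lemma dist_bounds_of_sphDist_lt {x y : X} {τ : ℝ} (hτ : τ * (1 + dist x a) ≤ 1 / 2)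
    (h : sphDist a (some x) (some y) < τ) :
    1 + dist y a ≤ 2 * (1 + dist x a) ∧ 1 + dist x a ≤ 2 * (1 + dist y a) ∧
      dist x y < 2 * τ * (1 + dist x a) ^ 2 := by
  have hT := one_add_dist_pos x a
  have hV := one_add_dist_pos y a
  simp only [sphDist] at h
  rw [div_lt_iff₀ (by positivity)] at h
  have hτ0 : 0 < τ := by
    by_contra! hcon
    nlinarith [mul_pos hT hV, dist_nonneg (x := x) (y := y)]
  have h1 : dist x y < (1 + dist y a) / 2 := by nlinarith
  have h2 := dist_triangle_left y a x
  have h3 := dist_triangle x y a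
  have h4 : 1 + dist y a ≤ 2 * (1 + dist x a) := by linarith
  refine ⟨h4, by linarith, ?_⟩
  calc dist x y < τ * ((1 + dist x a) * (1 + dist y a)) := h
    _ ≤ τ * ((1 + dist x a) * (2 * (1 + dist x a))) := by gcongr
    _ = _ := by ring

end SphericalizedDistance

section DoublingFunctions

lemma le_mul_trans {f g h : ℝ≥0∞} {C D : ℝ≥0} (hfg : f ≤ C * g) (hgh : g ≤ D * h) :
    f ≤ ((C * D : ℝ≥0) : ℝ≥0∞) * h := by
  calc f ≤ C * g := hfg
    _ ≤ C * (D * h) := by gcongr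
    _ = _ := by push_cast; ring

/-- A monotone function satisfying a doubling condition grows at most by a constant factor under
any dilation of its argument. -/
lemma exists_le_mul_of_doubling (C : ℝ≥0) (K : ℝ) :
    ∃ C' : ℝ≥0, ∀ f : ℝ → ℝ≥0∞, Monotone f → (∀ r, 0 < r → f (2 * r) ≤ C * f r) →
      ∀ r, 0 < r → f (K * r) ≤ C' * f r := by
  obtain ⟨n, hn⟩ := pow_unbounded_of_one_lt K (one_lt_two : (1 : ℝ) < 2)
  refine ⟨C ^ n, fun f hf h r hr => ?_⟩
  have key : ∀ m : ℕ, f (2 ^ m * r) ≤ ((C ^ m : ℝ≥0) : ℝ≥0∞) * f r := by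
    intro m
    induction m with
    | zero => simp
    | succ m ih =>
      have := le_mul_trans (h (2 ^ m * r) (by positivity)) ih
      rw [pow_succ', pow_succ', mul_assoc]
      exact this
  exact (hf (by gcongr)).trans (key n)

/-- A quantity dominated by its increment decays geometrically. -/
lemma exists_decay_of_le_mul_increment (C : ℝ≥0) :
    ∃ θ : ℝ, 0 < θ ∧ θ < 1 ∧ ∀ u v w : ℝ≥0∞, u ≠ ⊤ → v + w = u → u ≤ C * v →
      w ≤ ENNReal.ofReal θ * u := by
  have hpos : (0 : ℝ) < C + 2 := by positivity
  refine ⟨1 - 1 / (C + 2), ?_, ?_, fun u v w hu hsum hle => ?_⟩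
  · rw [sub_pos, div_lt_one hpos]
    linarith [C.2]
  · have : 0 < 1 / ((C : ℝ) + 2) := by positivity
    linarith
  · obtain ⟨hv, hw⟩ := ENNReal.add_ne_top.1 (hsum ▸ hu)
    lift v to ℝ≥0 using hv
    lift w to ℝ≥0 using hw
    subst hsum
    have hle' : (v : ℝ) + w ≤ C * v := by exact_mod_cast hle
    have hv0 : (0 : ℝ) ≤ v := v.2
    rw [← ENNReal.ofReal_coe_nnreal (p := w), ← ENNReal.ofReal_coe_nnreal (p := v),
      ← ENNReal.ofReal_add v.coe_nonneg w.coe_nonneg, ← ENNReal.ofReal_mul' (by positivity)]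
    apply ENNReal.ofReal_le_ofReal
    have : 1 / ((C : ℝ) + 2) * (v + w) ≤ v := by
      rw [one_div_mul_eq_div, div_le_iff₀ hpos]
      linarith
    linarith

end DoublingFunctions

/-- The density `t ^ (-q)` of `μ̂_q` with respect to `μ`, as a function of `t = 1 + |x|`. -/
def sphDensity (q t : ℝ) : ℝ≥0∞ := ENNReal.ofReal ((t ^ q)⁻¹)

section Density

variable {q s t : ℝ}

lemma sphDensity_anti (hq : 0 < q) (hs : 0 < s) (h : s ≤ t) : sphDensity q t ≤ sphDensity q s := by
  unfold sphDensity
  gcongr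

lemma sphDensity_mul (q : ℝ) {c : ℝ} (hc : 0 < c) (hs : 0 < s) :
    sphDensity q s = ENNReal.ofReal (c ^ q) * sphDensity q (c * s) := by
  unfold sphDensity
  rw [← ENNReal.ofReal_mul (by positivity), Real.mul_rpow hc.le hs.le]
  congr 1
  have : 0 < c ^ q := Real.rpow_pos_of_pos hc q
  have : 0 < s ^ q := Real.rpow_pos_of_pos hs q
  field_simp

lemma sphDensity_le_mul (hq : 0 < q) {c : ℝ} (hc : 0 < c) (hs : 0 < s) (ht : 0 < t)
    (h : t ≤ c * s) : sphDensity q s ≤ ((c ^ q).toNNReal : ℝ≥0∞) * sphDensity q t := by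
  rw [sphDensity_mul q hc hs]
  exact mul_le_mul_right (sphDensity_anti hq ht h) _

end Density

section SphericalizedMeasure

variable [MetricSpace X] [MeasurableSpace X] {a : X} {μ : Measure X} {q : ℝ}

/-- The `μ̂_q`-measure of the neighbourhood `{x : t ≤ 1 + |x|}` of `∞`. -/
def sphTail (a : X) (q : ℝ) (μ : Measure X) (t : ℝ) : ℝ≥0∞ :=
  ∫⁻ x in {x | t ≤ 1 + dist x a}, sphDensity q (1 + dist x a) ∂μ

/-- The model quantity `t ^ (-q) * μ (B(a, t))`. -/
def sphModel (a : X) (q : ℝ) (μ : Measure X) (t : ℝ) : ℝ≥0∞ := sphDensity q t * μ (ball a t)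

lemma sphTail_anti {s t : ℝ} (h : s ≤ t) : sphTail a q μ t ≤ sphTail a q μ s :=
  lintegral_mono_set fun _ hx => h.trans hx

lemma sphMeas_mono {S T : Set (Option X)} (h : S ⊆ T) : sphMeas a q μ S ≤ sphMeas a q μ T :=
  lintegral_mono_set (preimage_mono h)

lemma sphMeas_le_sphTail {S : Set (Option X)} {t : ℝ} (h : ∀ y : X, some y ∈ S → t ≤ 1 + dist y a) :
    sphMeas a q μ S ≤ sphTail a q μ t :=
  lintegral_mono_set fun y hy => h y hy

lemma sphTail_le_sphMeas {S : Set (Option X)} {t : ℝ} (h : ∀ y : X, t ≤ 1 + dist y a → some y ∈ S) :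
    sphTail a q μ t ≤ sphMeas a q μ S :=
  lintegral_mono_set fun y hy => h y hy

lemma setLIntegral_sphDensity_le (hq : 0 < q) {S A : Set X} {t : ℝ} (ht : 0 < t) (hSA : S ⊆ A)
    (hS : ∀ y ∈ S, t ≤ 1 + dist y a) :
    ∫⁻ y in S, sphDensity q (1 + dist y a) ∂μ ≤ sphDensity q t * μ A := by
  calc ∫⁻ y in S, sphDensity q (1 + dist y a) ∂μ ≤ ∫⁻ _ in S, sphDensity q t ∂μ :=
        setLIntegral_mono measurable_const fun y hy => sphDensity_anti hq ht (hS y hy)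
    _ = sphDensity q t * μ S := setLIntegral_const _ _
    _ ≤ _ := by gcongr

lemma exists_sphModel_le_of_comparable (hq : 0 < q)
    (hD : ∀ K : ℝ, ∃ C : ℝ≥0, ∀ (x : X) (r : ℝ), 0 < r → μ (ball x (K * r)) ≤ C * μ (ball x r))
    {K : ℝ} (hK : 0 < K) :
    ∃ C : ℝ≥0, ∀ s t : ℝ, 0 < s → 0 < t → s ≤ K * t → t ≤ K * s →
      sphModel a q μ s ≤ C * sphModel a q μ t := by
  obtain ⟨C, hC⟩ := hD K
  refine ⟨(K ^ q).toNNReal * C, fun s t hs ht hst hts => ?_⟩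
  calc sphModel a q μ s
      ≤ ((K ^ q).toNNReal * sphDensity q t) * (C * μ (ball a t)) :=
        mul_le_mul' (sphDensity_le_mul hq hK hs ht hts)
          ((measure_mono (ball_subset_ball hst)).trans (hC a t ht))
    _ = _ := by rw [sphModel]; push_cast; ring

lemma annulus_le_sphTail (t lam : ℝ) :
    ∫⁻ y in {y | t ≤ 1 + dist y a ∧ 1 + dist y a < lam * t}, sphDensity q (1 + dist y a) ∂μ ≤
      sphTail a q μ t :=
  lintegral_mono_set fun _ hy => hy.1

/-- A lower mass bound of order `s < q` at `a` controls the tails of `μ̂_q`. -/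
lemma exists_sphTail_le_of_mass_bound (hq : 0 < q) {s Cs : ℝ} (hsq : s < q) (hCs : 0 < Cs)
    (h : ∀ r R : ℝ, 1 ≤ r → r ≤ R →
      ENNReal.ofReal (Cs * (r / R) ^ s) * μ (ball a R) ≤ μ (ball a r)) :
    ∃ C : ℝ≥0, ∀ t : ℝ, 1 ≤ t → sphTail a q μ t ≤ C * sphModel a q μ t := by
  have hθ : (2 : ℝ) ^ (s - q) < 1 := Real.rpow_lt_one_of_one_lt_of_neg one_lt_two (by linarith)
  have hθ0 : (0 : ℝ) < 2 ^ (s - q) := by positivity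
  have hsum : Summable fun n : ℕ => Cs⁻¹ * 2 ^ s * ((2 : ℝ) ^ (s - q)) ^ n :=
    (summable_geometric_of_lt_one hθ0.le hθ).mul_left _
  refine ⟨(∑' n : ℕ, Cs⁻¹ * 2 ^ s * ((2 : ℝ) ^ (s - q)) ^ n).toNNReal, fun t ht => ?_⟩
  have ht0 : 0 < t := by linarith
  have hcover : {x : X | t ≤ 1 + dist x a} ⊆
      ⋃ n : ℕ, {x : X | 2 ^ n * t ≤ 1 + dist x a ∧ 1 + dist x a < 2 ^ (n + 1) * t} := by
    intro x hx
    obtain ⟨n, h1, h2⟩ := exists_nat_pow_near ((one_le_div ht0).2 hx) (one_lt_two : (1 : ℝ) < 2)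
    exact mem_iUnion.2 ⟨n, (le_div_iff₀ ht0).1 h1, (div_lt_iff₀ ht0).1 h2⟩
  have hterm : ∀ n : ℕ,
      ∫⁻ x in {x : X | 2 ^ n * t ≤ 1 + dist x a ∧ 1 + dist x a < 2 ^ (n + 1) * t},
        sphDensity q (1 + dist x a) ∂μ ≤
      ENNReal.ofReal (Cs⁻¹ * 2 ^ s * ((2 : ℝ) ^ (s - q)) ^ n) * sphModel a q μ t := by
    intro n
    have hV : μ (ball a (2 ^ (n + 1) * t)) ≤
        ENNReal.ofReal (Cs⁻¹ * (2 ^ (n + 1)) ^ s) * μ (ball a t) := by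
      have h1 := h t (2 ^ (n + 1) * t) ht
        (le_mul_of_one_le_left ht0.le (one_le_pow₀ one_le_two))
      have e : t / (2 ^ (n + 1) * t) = ((2 : ℝ) ^ (n + 1))⁻¹ := by field_simp
      rw [e, Real.inv_rpow (by positivity)] at h1
      have hp : (0 : ℝ) < (2 ^ (n + 1)) ^ s := by positivity
      calc μ (ball a (2 ^ (n + 1) * t))
          = ENNReal.ofReal (Cs⁻¹ * (2 ^ (n + 1)) ^ s) *
              (ENNReal.ofReal (Cs * ((2 ^ (n + 1)) ^ s)⁻¹) * μ (ball a (2 ^ (n + 1) * t))) := by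
            rw [← mul_assoc, ← ENNReal.ofReal_mul (by positivity)]
            have : Cs⁻¹ * (2 ^ (n + 1)) ^ s * (Cs * (((2 : ℝ) ^ (n + 1)) ^ s)⁻¹) = 1 := by
              field_simp
            rw [this, ENNReal.ofReal_one, one_mul]
        _ ≤ _ := by gcongr
    have hw : sphDensity q (2 ^ n * t) = ENNReal.ofReal (((2 ^ n) ^ q)⁻¹) * sphDensity q t := by
      have hp : (0 : ℝ) < (2 ^ n) ^ q := by positivity
      rw [sphDensity_mul q (c := 2 ^ n) (by positivity) ht0, ← mul_assoc,
        ← ENNReal.ofReal_mul (by positivity), inv_mul_cancel₀ hp.ne', ENNReal.ofReal_one, one_mul]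
    have hc : ((2 ^ n) ^ q)⁻¹ * (Cs⁻¹ * (2 ^ (n + 1)) ^ s) =
        Cs⁻¹ * 2 ^ s * ((2 : ℝ) ^ (s - q)) ^ n := by
      rw [← Real.rpow_natCast, ← Real.rpow_natCast, ← Real.rpow_natCast, ← Real.rpow_mul two_pos.le,
        ← Real.rpow_mul two_pos.le, ← Real.rpow_mul two_pos.le, ← Real.rpow_neg two_pos.le,
        mul_left_comm, mul_assoc, ← Real.rpow_add two_pos, ← Real.rpow_add two_pos]
      congr 2
      push_cast
      ring
    calc ∫⁻ x in {x : X | 2 ^ n * t ≤ 1 + dist x a ∧ 1 + dist x a < 2 ^ (n + 1) * t},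
          sphDensity q (1 + dist x a) ∂μ
        ≤ sphDensity q (2 ^ n * t) * μ (ball a (2 ^ (n + 1) * t)) := by
          refine setLIntegral_sphDensity_le hq (by positivity) (fun x hx => ?_) fun x hx => hx.1
          rw [mem_ball]
          linarith [hx.2]
      _ ≤ (ENNReal.ofReal (((2 ^ n) ^ q)⁻¹) * sphDensity q t) *
            (ENNReal.ofReal (Cs⁻¹ * (2 ^ (n + 1)) ^ s) * μ (ball a t)) := by
          rw [hw]
          gcongr
      _ = _ := by
          rw [← hc, ENNReal.ofReal_mul (p := ((2 ^ n) ^ q)⁻¹) (by positivity), sphModel]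
          ring
  calc sphTail a q μ t
      ≤ ∑' n : ℕ, ∫⁻ x in {x : X | 2 ^ n * t ≤ 1 + dist x a ∧ 1 + dist x a < 2 ^ (n + 1) * t},
          sphDensity q (1 + dist x a) ∂μ :=
        (lintegral_mono_set hcover).trans (lintegral_iUnion_le _ _)
    _ ≤ ∑' n : ℕ, ENNReal.ofReal (Cs⁻¹ * 2 ^ s * ((2 : ℝ) ^ (s - q)) ^ n) * sphModel a q μ t :=
        ENNReal.tsum_le_tsum hterm
    _ = _ := by
        rw [ENNReal.tsum_mul_right,
          ← ENNReal.ofReal_tsum_of_nonneg (fun n => by positivity) hsum]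
        rfl

lemma sphMeas_le_sphTail_of_large_radius {x : X} {ρ : ℝ} (hρ : 0 < ρ)
    (h : 1 ≤ 48 * (ρ * (1 + dist x a))) :
    sphMeas a q μ {y | sphDist a (some x) y < 24 * ρ} ≤ sphTail a q μ (max 1 (1 / (72 * ρ))) := by
  refine sphMeas_le_sphTail fun y hy => max_le (by linarith [dist_nonneg (x := y) (y := a)]) ?_
  have hT := one_add_dist_pos x a
  have hV := one_add_dist_pos y a
  have h1 := sphDhat_le_add_sphDist a (some x) (some y)
  have h2 : sphDist a (some x) (some y) < 24 * ρ := hy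
  simp only [sphDhat, sphD] at h1
  have h3 : 1 / (1 + dist x a) ≤ 48 * ρ := by
    rw [div_le_iff₀ hT]
    linarith
  rw [div_le_comm₀ (by positivity) hV]
  linarith

lemma exists_sphTail_le_of_comparable (hq : 0 < q)
    (hD : ∀ K : ℝ, ∃ C : ℝ≥0, ∀ (x : X) (r : ℝ), 0 < r → μ (ball x (K * r)) ≤ C * μ (ball x r))
    (hU : ∃ C : ℝ≥0, ∀ t : ℝ, 1 ≤ t → sphTail a q μ t ≤ C * sphModel a q μ t)
    (hL : ∃ C : ℝ≥0, ∀ t : ℝ, 1 ≤ t → sphModel a q μ t ≤ C * sphTail a q μ t)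
    {A B : ℝ} (hA : 0 < A) (hAB : 1 ≤ A * B) (hB : 0 < B) :
    ∃ C : ℝ≥0, ∀ ρ : ℝ, 0 < ρ →
      sphTail a q μ (max 1 (1 / (A * ρ))) ≤ C * sphTail a q μ (max 1 (B / ρ)) := by
  obtain ⟨CU, hCU⟩ := hU
  obtain ⟨CL, hCL⟩ := hL
  obtain ⟨C₁, hC₁⟩ := exists_sphModel_le_of_comparable (a := a) hq hD (K := A * B) (by positivity)
  refine ⟨CU * C₁ * CL, fun ρ hρ => ?_⟩
  have h1 : 1 / (A * ρ) ≤ B / ρ := by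
    rw [div_le_div_iff₀ (by positivity) hρ]
    nlinarith
  have h2 : max 1 (B / ρ) ≤ A * B * max 1 (1 / (A * ρ)) := by
    refine max_le (one_le_mul_of_one_le_of_one_le hAB (le_max_left _ _)) ?_
    calc B / ρ = A * B * (1 / (A * ρ)) := by field_simp
      _ ≤ _ := by gcongr; exact le_max_right _ _
  have h3 : max 1 (1 / (A * ρ)) ≤ A * B * max 1 (B / ρ) :=
    (max_le_max le_rfl h1).trans (le_mul_of_one_le_left (by positivity) hAB)
  exact le_mul_trans (le_mul_trans (hCU _ (le_max_left _ _))
    (hC₁ _ (max 1 (B / ρ)) (by positivity) (by positivity) h3 h2)) (hCL _ (le_max_left _ _))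

/-- If `μ̂_q` is doubling, then its tails are controlled by the model quantity. -/
lemma exists_sphTail_le_of_doubling (hq : 0 < q)
    (hD : ∀ K : ℝ, ∃ C : ℝ≥0, ∀ (x : X) (r : ℝ), 0 < r → μ (ball x (K * r)) ≤ C * μ (ball x r))
    {κ : ℝ} (hκ : 1 < κ) (hup : ∀ r : ℝ, 1 ≤ r → (ball a (κ * r) \ ball a r).Nonempty)
    {C : ℝ≥0} (hC : ∀ (x : Option X) (r : ℝ), 0 < r →
      sphMeas a q μ {y | sphHatDist a x y < 2 * r} ≤
        C * sphMeas a q μ {y | sphHatDist a x y < r}) :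
    ∃ C : ℝ≥0, ∀ t : ℝ, 1 ≤ t → sphTail a q μ t ≤ C * sphModel a q μ t := by
  obtain ⟨C₁, hC₁⟩ := exists_le_mul_of_doubling C (24 * (2 + 2 * κ))
  obtain ⟨C₂, hC₂⟩ := hD (4 * κ)
  refine ⟨C₁ * (((2 : ℝ) ^ q).toNNReal * C₂), fun t ht => ?_⟩
  have ht0 : 0 < t := by linarith
  obtain ⟨z, hz1, hz2⟩ := hup t ht
  rw [mem_ball] at hz1
  rw [mem_ball, not_lt] at hz2
  have hT := one_add_dist_pos z a
  have hTt : 1 + dist z a ≤ 2 * κ * t := by nlinarith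
  have hbig : sphTail a q μ t ≤ sphMeas a q μ
      {y | sphHatDist a (some z) y < 24 * (2 + 2 * κ) * (1 / (24 * (1 + dist z a)))} := by
    refine sphTail_le_sphMeas fun y hy => ?_
    have h1 := sphDist_some_some_le a z y
    have h2 := sphHatDist_le_sphDist a (some z) (some y)
    have h3 : sphD a y ≤ 2 * κ * sphD a z := by
      simp only [sphD]
      rw [mul_one_div, div_le_div_iff₀ (one_add_dist_pos y a) hT]
      nlinarith
    have h4 : 24 * (2 + 2 * κ) * (1 / (24 * (1 + dist z a))) = (2 + 2 * κ) * sphD a z := by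
      simp only [sphD]
      field_simp
    have h5 : 0 < sphD a z := by simp only [sphD]; positivity
    change sphHatDist a (some z) (some y) < _
    rw [h4]
    linarith
  have hsmall : sphMeas a q μ {y | sphHatDist a (some z) y < 1 / (24 * (1 + dist z a))} ≤
      sphDensity q (t / 2) * μ (ball a (4 * κ * t)) := by
    have hbounds : ∀ y ∈ some ⁻¹' {y | sphHatDist a (some z) y < 1 / (24 * (1 + dist z a))},
        1 + dist y a ≤ 2 * (1 + dist z a) ∧ 1 + dist z a ≤ 2 * (1 + dist y a) := by
      intro y hy
      have h1 : sphHatDist a (some z) (some y) < 1 / (24 * (1 + dist z a)) := hy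
      have h2 := sphDist_le_mul_sphHatDist a (some z) (some y)
      have h3 : 12 * (1 / (24 * (1 + dist z a))) = 1 / (2 * (1 + dist z a)) := by
        field_simp
        norm_num
      have h4 := dist_bounds_of_sphDist_lt (a := a) (x := z) (y := y)
        (τ := 1 / (2 * (1 + dist z a))) (by field_simp; rfl) (by linarith)
      exact ⟨h4.1, h4.2.1⟩
    refine setLIntegral_sphDensity_le hq (by positivity) (fun y hy => ?_) fun y hy => ?_
    · rw [mem_ball]
      linarith [(hbounds y hy).1]
    · linarith [(hbounds y hy).2]
  refine le_mul_trans (hbig.trans (hC₁ (fun r => sphMeas a q μ {y | sphHatDist a (some z) y < r})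
    (fun r s hrs => sphMeas_mono fun y (hy : _ < r) => lt_of_lt_of_le hy hrs)
    (hC (some z)) _ (by positivity))) (hsmall.trans ?_)
  calc sphDensity q (t / 2) * μ (ball a (4 * κ * t))
      ≤ (((2 : ℝ) ^ q).toNNReal * sphDensity q t) * (C₂ * μ (ball a t)) :=
        mul_le_mul' (sphDensity_le_mul hq two_pos (by positivity) ht0 (by linarith)) (hC₂ a t ht0)
    _ = _ := by rw [sphModel]; push_cast; ring

variable [BorelSpace X]

lemma measurable_sphDensity_dist (a : X) (q : ℝ) :
    Measurable fun x : X => sphDensity q (1 + dist x a) := by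
  unfold sphDensity
  fun_prop

lemma le_setLIntegral_sphDensity (hq : 0 < q) {S A : Set X} {t : ℝ} (hAS : A ⊆ S)
    (hA : ∀ y ∈ A, 1 + dist y a ≤ t) :
    sphDensity q t * μ A ≤ ∫⁻ y in S, sphDensity q (1 + dist y a) ∂μ := by
  calc sphDensity q t * μ A = ∫⁻ _ in A, sphDensity q t ∂μ := (setLIntegral_const _ _).symm
    _ ≤ ∫⁻ y in A, sphDensity q (1 + dist y a) ∂μ :=
        setLIntegral_mono (measurable_sphDensity_dist a q) fun y hy =>
          sphDensity_anti hq (one_add_dist_pos y a) (hA y hy)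
    _ ≤ _ := lintegral_mono_set hAS

/-- Uniform perfectness at `a` bounds the model quantity by the measure of an annulus. -/
lemma exists_sphModel_le_annulus (hq : 0 < q)
    (hD : ∀ K : ℝ, ∃ C : ℝ≥0, ∀ (x : X) (r : ℝ), 0 < r → μ (ball x (K * r)) ≤ C * μ (ball x r))
    {κ : ℝ} (hκ : 1 < κ) (hup : ∀ r : ℝ, 1 ≤ r → (ball a (κ * r) \ ball a r).Nonempty) :
    ∃ C : ℝ≥0, ∀ t : ℝ, 1 ≤ t → sphModel a q μ t ≤
      C * ∫⁻ y in {y | t ≤ 1 + dist y a ∧ 1 + dist y a < (2 * κ + 2) * t},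
        sphDensity q (1 + dist y a) ∂μ := by
  obtain ⟨C, hC⟩ := hD (2 * κ + 2)
  refine ⟨((2 * κ + 2) ^ q).toNNReal * C, fun t ht => ?_⟩
  have ht0 : 0 < t := by linarith
  obtain ⟨z, hz1, hz2⟩ := hup (2 * t) (by linarith)
  rw [mem_ball] at hz1
  rw [mem_ball, not_lt] at hz2
  have hsub : ball a t ⊆ ball z ((2 * κ + 2) * t) := by
    intro y hy
    rw [mem_ball] at hy ⊢
    nlinarith [dist_triangle_right y z a]
  have hbounds : ∀ y ∈ ball z t, t ≤ 1 + dist y a ∧ 1 + dist y a < (2 * κ + 2) * t := by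
    intro y hy
    rw [mem_ball] at hy
    constructor
    · linarith [dist_triangle_left z a y]
    · nlinarith [dist_triangle y z a]
  calc sphModel a q μ t
      ≤ (((2 * κ + 2) ^ q).toNNReal * sphDensity q ((2 * κ + 2) * t)) * (C * μ (ball z t)) :=
        mul_le_mul' (sphDensity_le_mul hq (by linarith) ht0 (by positivity) le_rfl)
          ((measure_mono hsub).trans (hC z t ht0))
    _ = ((((2 * κ + 2) ^ q).toNNReal * C : ℝ≥0) : ℝ≥0∞) *
          (sphDensity q ((2 * κ + 2) * t) * μ (ball z t)) := by push_cast; ring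
    _ ≤ _ := by
        gcongr
        exact le_setLIntegral_sphDensity hq hbounds fun y hy => (hbounds y hy).2.le

lemma annulus_add_sphTail {t lam : ℝ} (ht : 0 < t) (hlam : 1 ≤ lam) :
    (∫⁻ y in {y | t ≤ 1 + dist y a ∧ 1 + dist y a < lam * t}, sphDensity q (1 + dist y a) ∂μ) +
      sphTail a q μ (lam * t) = sphTail a q μ t := by
  have hm : MeasurableSet {y : X | lam * t ≤ 1 + dist y a} :=
    measurableSet_le measurable_const (by fun_prop)
  rw [sphTail, ← lintegral_union hm, sphTail]
  · congr 2
    ext y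
    simp only [mem_union, mem_ofPred_eq]
    constructor
    · rintro (h | h)
      · exact h.1
      · nlinarith
    · intro h
      rcases lt_or_ge (1 + dist y a) (lam * t) with h' | h'
      · exact Or.inl ⟨h, h'⟩
      · exact Or.inr h'
  · rw [Set.disjoint_left]
    intro y hy hy'
    exact absurd hy.2 (not_lt.2 hy')

lemma sphDensity_mul_ball_le_sphMeas (hq : 0 < q) {x : X} {τ ρ : ℝ} (hτ : τ ≤ 1 / 2)
    (hτρ : τ ≤ ρ * (1 + dist x a)) (hτ0 : 0 < τ) :
    sphDensity q (2 * (1 + dist x a)) * μ (ball x (τ * (1 + dist x a) / 2)) ≤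
      sphMeas a q μ {y | sphDist a (some x) y < ρ} := by
  have hT := one_add_dist_pos x a
  have hnear : ∀ y ∈ ball x (τ * (1 + dist x a) / 2), dist x y < (1 + dist x a) / 4 := by
    intro y hy
    rw [mem_ball'] at hy
    nlinarith
  refine le_setLIntegral_sphDensity hq (fun y hy => ?_) fun y hy => ?_
  · have h1 := hnear y hy
    rw [mem_ball'] at hy
    have h2 := dist_triangle x y a
    have hV := one_add_dist_pos y a
    change dist x y / ((1 + dist x a) * (1 + dist y a)) < ρ
    rw [div_lt_iff₀ (by positivity)]
    have h3 : (1 + dist x a) / 2 ≤ 1 + dist y a := by linarith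
    have h4 : 0 ≤ ρ * (1 + dist x a) := hτ0.le.trans hτρ
    calc dist x y < τ * ((1 + dist x a) / 2) := by linarith
      _ ≤ (ρ * (1 + dist x a)) * (1 + dist y a) := by gcongr
      _ = _ := by ring
  · linarith [hnear y hy, dist_triangle_left y a x]

lemma exists_sphMeas_le_of_small_radius (hq : 0 < q)
    (hD : ∀ K : ℝ, ∃ C : ℝ≥0, ∀ (x : X) (r : ℝ), 0 < r → μ (ball x (K * r)) ≤ C * μ (ball x r)) :
    ∃ C : ℝ≥0, ∀ (x : X) (ρ : ℝ), 0 < ρ → 24 * ρ * (1 + dist x a) ≤ 1 / 2 →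
      sphMeas a q μ {y | sphDist a (some x) y < 24 * ρ} ≤
        C * sphMeas a q μ {y | sphDist a (some x) y < ρ} := by
  obtain ⟨C, hC⟩ := hD 96
  refine ⟨((4 : ℝ) ^ q).toNNReal * C, fun x ρ hρ h => ?_⟩
  have hT := one_add_dist_pos x a
  have hbig : sphMeas a q μ {y | sphDist a (some x) y < 24 * ρ} ≤
      sphDensity q ((1 + dist x a) / 2) *
        μ (ball x (96 * (ρ * (1 + dist x a) * (1 + dist x a) / 2))) := by
    refine setLIntegral_sphDensity_le hq (by positivity) (fun y hy => ?_) fun y hy => ?_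
    · have := (dist_bounds_of_sphDist_lt h hy).2.2
      rw [mem_ball']
      linarith
    · have := (dist_bounds_of_sphDist_lt h hy).2.1
      linarith
  calc sphMeas a q μ {y | sphDist a (some x) y < 24 * ρ}
      ≤ _ := hbig
    _ ≤ (((4 : ℝ) ^ q).toNNReal * sphDensity q (2 * (1 + dist x a))) *
          (C * μ (ball x (ρ * (1 + dist x a) * (1 + dist x a) / 2))) :=
        mul_le_mul' (sphDensity_le_mul hq (by norm_num) (by positivity) (by positivity)
          (by linarith)) (hC x _ (by positivity))
    _ = ((((4 : ℝ) ^ q).toNNReal * C : ℝ≥0) : ℝ≥0∞) * (sphDensity q (2 * (1 + dist x a)) *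
          μ (ball x (ρ * (1 + dist x a) * (1 + dist x a) / 2))) := by push_cast; ring
    _ ≤ _ := by
        gcongr
        exact sphDensity_mul_ball_le_sphMeas hq (by linarith) le_rfl (by positivity)

lemma exists_sphMeas_le_of_medium_radius (hq : 0 < q)
    (hD : ∀ K : ℝ, ∃ C : ℝ≥0, ∀ (x : X) (r : ℝ), 0 < r → μ (ball x (K * r)) ≤ C * μ (ball x r))
    (hU : ∃ C : ℝ≥0, ∀ t : ℝ, 1 ≤ t → sphTail a q μ t ≤ C * sphModel a q μ t) :
    ∃ C : ℝ≥0, ∀ (x : X) (ρ : ℝ), 0 < ρ → 1 ≤ 48 * (ρ * (1 + dist x a)) →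
      ρ * (1 + dist x a) ≤ 4 →
      sphMeas a q μ {y | sphDist a (some x) y < 24 * ρ} ≤
        C * sphMeas a q μ {y | sphDist a (some x) y < ρ} := by
  obtain ⟨CU, hCU⟩ := hU
  obtain ⟨C₁, hC₁⟩ := exists_sphModel_le_of_comparable (a := a) hq hD (K := 288) (by norm_num)
  obtain ⟨C₂, hC₂⟩ := hD 192
  refine ⟨CU * C₁ * (((2 : ℝ) ^ q).toNNReal * C₂), fun x ρ hρ h48 h4 => ?_⟩
  have hT := one_add_dist_pos x a
  have hT1 : 1 ≤ 1 + dist x a := by linarith [dist_nonneg (x := x) (y := a)]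
  have hmax1 : max 1 (1 / (72 * ρ)) ≤ 1 + dist x a := by
    refine max_le hT1 ?_
    rw [div_le_iff₀ (by positivity)]
    linarith
  have hmax2 : 1 + dist x a ≤ 288 * max 1 (1 / (72 * ρ)) := by
    have : (1 + dist x a) / 288 ≤ 1 / (72 * ρ) := by
      rw [div_le_div_iff₀ (by norm_num) (by positivity)]
      linarith
    linarith [le_max_right 1 (1 / (72 * ρ))]
  have hmax0 : 0 < max 1 (1 / (72 * ρ)) := lt_max_of_lt_left one_pos
  have hV : μ (ball a (1 + dist x a)) ≤ C₂ * μ (ball x (1 / 48 * (1 + dist x a) / 2)) := by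
    refine (measure_mono fun y hy => ?_).trans (hC₂ x _ (by positivity))
    rw [mem_ball] at hy ⊢
    linarith [dist_triangle_right y x a]
  refine le_mul_trans (le_mul_trans
    ((sphMeas_le_sphTail_of_large_radius hρ h48).trans (hCU _ (le_max_left _ _)))
    (hC₁ _ (1 + dist x a) hmax0 hT (by linarith) hmax2)) ?_
  calc sphModel a q μ (1 + dist x a)
      ≤ (((2 : ℝ) ^ q).toNNReal * sphDensity q (2 * (1 + dist x a))) *
          (C₂ * μ (ball x (1 / 48 * (1 + dist x a) / 2))) :=
        mul_le_mul' (sphDensity_le_mul hq two_pos hT (by positivity) le_rfl) hV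
    _ = ((((2 : ℝ) ^ q).toNNReal * C₂ : ℝ≥0) : ℝ≥0∞) * (sphDensity q (2 * (1 + dist x a)) *
          μ (ball x (1 / 48 * (1 + dist x a) / 2))) := by push_cast; ring
    _ ≤ _ := by
        gcongr
        exact sphDensity_mul_ball_le_sphMeas hq (by norm_num) (by linarith) (by norm_num)

lemma exists_sphMeas_sphDist_le (hq : 0 < q)
    (hD : ∀ K : ℝ, ∃ C : ℝ≥0, ∀ (x : X) (r : ℝ), 0 < r → μ (ball x (K * r)) ≤ C * μ (ball x r))
    (hU : ∃ C : ℝ≥0, ∀ t : ℝ, 1 ≤ t → sphTail a q μ t ≤ C * sphModel a q μ t)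
    (hL : ∃ C : ℝ≥0, ∀ t : ℝ, 1 ≤ t → sphModel a q μ t ≤ C * sphTail a q μ t) :
    ∃ C : ℝ≥0, ∀ (x : Option X) (ρ : ℝ), 0 < ρ →
      sphMeas a q μ {y | sphDist a x y < 24 * ρ} ≤
        C * sphMeas a q μ {y | sphDist a x y < ρ} := by
  obtain ⟨C₁, hC₁⟩ := exists_sphMeas_le_of_small_radius (a := a) hq hD
  obtain ⟨C₂, hC₂⟩ := exists_sphMeas_le_of_medium_radius hq hD hU
  obtain ⟨C₃, hC₃⟩ := exists_sphTail_le_of_comparable hq hD hU hL (A := 72) (B := 2)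
    (by norm_num) (by norm_num) (by norm_num)
  obtain ⟨C₄, hC₄⟩ := exists_sphTail_le_of_comparable hq hD hU hL (A := 24) (B := 2)
    (by norm_num) (by norm_num) (by norm_num)
  refine ⟨C₁ + C₂ + C₃ + C₄, fun x ρ hρ => ?_⟩
  have weaken : ∀ {C : ℝ≥0}, C ≤ C₁ + C₂ + C₃ + C₄ → ∀ {f g : ℝ≥0∞}, f ≤ C * g →
      f ≤ ((C₁ + C₂ + C₃ + C₄ : ℝ≥0) : ℝ≥0∞) * g :=
    fun hC _ _ hfg => hfg.trans (mul_le_mul_left (by exact_mod_cast hC) _)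
  rcases x with _ | x
  · refine weaken le_add_self (le_trans ?_ ((hC₄ ρ hρ).trans (mul_le_mul_right ?_ _)))
    · refine sphMeas_le_sphTail fun y hy =>
        max_le (by linarith [dist_nonneg (x := y) (y := a)]) ?_
      have h : 1 / (1 + dist y a) < 24 * ρ := hy
      rw [div_le_comm₀ (by positivity) (one_add_dist_pos y a)]
      exact h.le
    · refine sphTail_le_sphMeas fun y hy => ?_
      have h : 2 / ρ ≤ 1 + dist y a := (le_max_right _ _).trans hy
      change 1 / (1 + dist y a) < ρ
      rw [div_lt_iff₀ (one_add_dist_pos y a)]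
      rw [div_le_iff₀ hρ] at h
      linarith
  · have hT := one_add_dist_pos x a
    rcases le_or_gt (24 * ρ * (1 + dist x a)) (1 / 2) with h | h
    · exact weaken (by rw [add_assoc, add_assoc]; exact le_self_add) (hC₁ x ρ hρ h)
    have h48 : 1 ≤ 48 * (ρ * (1 + dist x a)) := by linarith
    rcases le_or_gt (ρ * (1 + dist x a)) 4 with h4 | h4
    · exact weaken (le_self_add.trans' (le_self_add.trans' le_add_self)) (hC₂ x ρ hρ h48 h4)
    refine weaken (le_self_add.trans' le_add_self)
      ((sphMeas_le_sphTail_of_large_radius hρ h48).trans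
        ((hC₃ ρ hρ).trans (mul_le_mul_right (sphTail_le_sphMeas fun y hy => ?_) _)))
    have h1 : 2 / ρ ≤ 1 + dist y a := (le_max_right _ _).trans hy
    rw [div_le_comm₀ hρ (one_add_dist_pos y a)] at h1
    have h2 : 2 / (1 + dist y a) = 2 * sphD a y := by simp only [sphD]; ring
    have h3 : sphD a x < ρ / 4 := by
      simp only [sphD]
      rw [div_lt_iff₀ hT]
      linarith
    have h4 := sphDist_some_some_le a x y
    change sphDist a (some x) (some y) < ρ
    linarith

/-- Two-sided control of the tails of `μ̂_q` makes `μ̂_q` doubling for `d̂`. -/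
lemma exists_sphMeas_sphHatDist_le (hq : 0 < q)
    (hD : ∀ K : ℝ, ∃ C : ℝ≥0, ∀ (x : X) (r : ℝ), 0 < r → μ (ball x (K * r)) ≤ C * μ (ball x r))
    (hU : ∃ C : ℝ≥0, ∀ t : ℝ, 1 ≤ t → sphTail a q μ t ≤ C * sphModel a q μ t)
    (hL : ∃ C : ℝ≥0, ∀ t : ℝ, 1 ≤ t → sphModel a q μ t ≤ C * sphTail a q μ t) :
    ∃ C : ℝ≥0, ∀ (x : Option X) (r : ℝ), 0 < r →
      sphMeas a q μ {y | sphHatDist a x y < 2 * r} ≤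
        C * sphMeas a q μ {y | sphHatDist a x y < r} := by
  obtain ⟨C, hC⟩ := exists_sphMeas_sphDist_le hq hD hU hL
  refine ⟨C, fun x r hr => ?_⟩
  calc sphMeas a q μ {y | sphHatDist a x y < 2 * r}
      ≤ sphMeas a q μ {y | sphDist a x y < 24 * r} :=
        sphMeas_mono fun y (hy : sphHatDist a x y < 2 * r) =>
          show sphDist a x y < 24 * r by linarith [sphDist_le_mul_sphHatDist a x y]
    _ ≤ C * sphMeas a q μ {y | sphDist a x y < r} := hC x r hr
    _ ≤ _ := by
        gcongr
        exact sphMeas_mono fun y (hy : sphDist a x y < r) =>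
          (sphHatDist_le_sphDist a x y).trans_lt hy

/-- Two-sided control of the tails of `μ̂_q` yields a lower mass bound of order `s < q` at `a`. -/
lemma exists_mass_bound (hq : 0 < q) (hfin : ∀ (x : X) (r : ℝ), 0 < r → μ (ball x r) < ⊤)
    {lam : ℝ} (hlam : 1 < lam) {CU CA : ℝ≥0}
    (hU : ∀ t : ℝ, 1 ≤ t → sphTail a q μ t ≤ CU * sphModel a q μ t)
    (hA : ∀ t : ℝ, 1 ≤ t → sphModel a q μ t ≤
      CA * ∫⁻ y in {y | t ≤ 1 + dist y a ∧ 1 + dist y a < lam * t},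
        sphDensity q (1 + dist y a) ∂μ) :
    ∃ s Cs : ℝ, 0 < s ∧ s < q ∧ 0 < Cs ∧ ∀ r R : ℝ, 1 ≤ r → r ≤ R →
      ENNReal.ofReal (Cs * (r / R) ^ s) * μ (ball a R) ≤ μ (ball a r) := by
  have hlam0 : 0 < lam := by linarith
  have htop : ∀ t : ℝ, 1 ≤ t → sphTail a q μ t ≠ ⊤ := fun t ht =>
    ne_top_of_le_ne_top (ENNReal.mul_ne_top ENNReal.coe_ne_top
      (ENNReal.mul_ne_top ENNReal.ofReal_ne_top (hfin a t (by linarith)).ne)) (hU t ht)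
  obtain ⟨θ, hθ0, hθ1, hθ⟩ := exists_decay_of_le_mul_increment (CU * CA)
  have hpow : ∀ (n : ℕ) (t : ℝ), 1 ≤ t →
      sphTail a q μ (lam ^ n * t) ≤ ENNReal.ofReal (θ ^ n) * sphTail a q μ t := by
    intro n t ht
    induction n with
    | zero => simp
    | succ n ih =>
      have h1 : 1 ≤ lam ^ n * t := one_le_mul_of_one_le_of_one_le (one_le_pow₀ hlam.le) ht
      have h2 := hθ _ _ _ (htop _ h1) (annulus_add_sphTail (by linarith) hlam.le)
        (le_mul_trans (hU _ h1) (hA _ h1))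
      rw [pow_succ', mul_assoc, pow_succ', ENNReal.ofReal_mul hθ0.le, mul_assoc]
      exact h2.trans (by gcongr)
  obtain ⟨ε, hε0, hεq, hε⟩ : ∃ ε : ℝ, 0 < ε ∧ ε < q ∧ θ ≤ lam ^ (-ε) := by
    have hlog : 0 < Real.log lam := Real.log_pos hlam
    have hlogθ : Real.log θ < 0 := Real.log_neg hθ0 hθ1
    refine ⟨min (q / 2) (-Real.log θ / Real.log lam), lt_min (by linarith)
      (div_pos (by linarith) hlog), (min_le_left _ _).trans_lt (by linarith), ?_⟩
    rw [Real.le_rpow_iff_log_le hθ0 hlam0]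
    have h := min_le_right (q / 2) (-Real.log θ / Real.log lam)
    rw [le_div_iff₀ hlog] at h
    linarith
  have hM : (0 : ℝ) < CA * CU * lam ^ ε + 1 := by positivity
  refine ⟨q - ε, (CA * CU * lam ^ ε + 1)⁻¹, by linarith, by linarith, by positivity,
    fun r R hr hrR => ?_⟩
  have hr0 : 0 < r := by linarith
  have hR0 : 0 < R := by linarith
  have hx0 : 0 < R / r := by positivity
  obtain ⟨n, hn1, hn2⟩ := exists_nat_pow_near ((one_le_div hr0).2 hrR) hlam
  have hθn : θ ^ n ≤ lam ^ ε * (R / r) ^ (-ε) := by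
    calc θ ^ n ≤ (lam ^ (-ε)) ^ n := by gcongr
      _ = lam ^ ε * (lam ^ (n + 1)) ^ (-ε) := by
        rw [← Real.rpow_natCast, ← Real.rpow_natCast, ← Real.rpow_mul hlam0.le,
          ← Real.rpow_mul hlam0.le, ← Real.rpow_add hlam0]
        congr 1
        push_cast
        ring
      _ ≤ lam ^ ε * (R / r) ^ (-ε) := by
        gcongr ?_ * ?_
        exact Real.rpow_le_rpow_of_nonpos hx0 hn2.le (by linarith)
  have hmodel : sphModel a q μ R ≤
      ENNReal.ofReal ((CA * CU * lam ^ ε + 1) * (R / r) ^ (-ε)) * sphModel a q μ r := by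
    calc sphModel a q μ R ≤ CA * sphTail a q μ R :=
          (hA R (by linarith)).trans (mul_le_mul_right (annulus_le_sphTail _ _) _)
      _ ≤ CA * sphTail a q μ (lam ^ n * r) := by
          gcongr
          exact sphTail_anti ((le_div_iff₀ hr0).1 hn1)
      _ ≤ CA * (ENNReal.ofReal (θ ^ n) * (CU * sphModel a q μ r)) := by
          gcongr
          exact (hpow n r hr).trans (mul_le_mul_right (hU r hr) _)
      _ = ENNReal.ofReal (CA * CU * θ ^ n) * sphModel a q μ r := by
          rw [ENNReal.ofReal_mul (by positivity), ENNReal.ofReal_mul (by positivity),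
            ENNReal.ofReal_coe_nnreal, ENNReal.ofReal_coe_nnreal]
          ring
      _ ≤ _ := by
          refine mul_le_mul_left (ENNReal.ofReal_le_ofReal ?_) _
          have h1 : (CA : ℝ) * CU * θ ^ n ≤ CA * CU * (lam ^ ε * (R / r) ^ (-ε)) := by gcongr
          have h2 : 0 < (R / r) ^ (-ε) := by positivity
          linarith
  have hdens : sphDensity q r = ENNReal.ofReal ((R / r) ^ q) * sphDensity q R := by
    rw [sphDensity_mul q hx0 hr0, div_mul_cancel₀ _ hr0.ne']
  have hRpos : sphDensity q R ≠ 0 := by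
    have : 0 < (R ^ q)⁻¹ := by positivity
    simpa [sphDensity] using this
  have hV : μ (ball a R) ≤
      ENNReal.ofReal ((CA * CU * lam ^ ε + 1) * (R / r) ^ (q - ε)) * μ (ball a r) := by
    rw [← ENNReal.mul_le_mul_iff_right hRpos ENNReal.ofReal_ne_top]
    refine hmodel.trans_eq ?_
    rw [sphModel, hdens, sub_eq_neg_add, Real.rpow_add hx0,
      ← mul_assoc (CA * CU * lam ^ ε + 1), ENNReal.ofReal_mul
      (p := (CA * CU * lam ^ ε + 1) * (R / r) ^ (-ε)) (by positivity)]
    ring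
  calc ENNReal.ofReal ((CA * CU * lam ^ ε + 1)⁻¹ * (r / R) ^ (q - ε)) * μ (ball a R)
      ≤ ENNReal.ofReal ((CA * CU * lam ^ ε + 1)⁻¹ * (r / R) ^ (q - ε)) *
          (ENNReal.ofReal ((CA * CU * lam ^ ε + 1) * (R / r) ^ (q - ε)) * μ (ball a r)) := by
        gcongr
    _ = μ (ball a r) := by
        have hp : 0 < (R / r) ^ (q - ε) := by positivity
        rw [← mul_assoc, ← ENNReal.ofReal_mul (by positivity), ← inv_div R r,
          Real.inv_rpow hx0.le]
        have : (CA * CU * lam ^ ε + 1)⁻¹ * ((R / r) ^ (q - ε))⁻¹ *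
            ((CA * CU * lam ^ ε + 1) * (R / r) ^ (q - ε)) = 1 := by
          generalize CA * CU * lam ^ ε + 1 = M at hM
          field_simp
        rw [this, ENNReal.ofReal_one, one_mul]

end SphericalizedMeasure

/-- If `X` is uniformly perfect at the base point `a` for radii
`≥ 1` and `μ` is doubling on `X`, and `q > 0`, then `μ̂_q` is doubling on `(X̂, d̂)`
if and only if there exist `0 < s < q` and `C_s > 0` such that
`μ(B(a,r))/μ(B(a,R)) ≥ C_s (r/R)^s` whenever `1 ≤ r ≤ R < ∞`. -/
theorem statement16 [MetricSpace X] [MeasurableSpace X] [BorelSpace X]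
    (hX : ¬ Bornology.IsBounded (Set.univ : Set X)) (a : X) (μ : Measure X)
    (hpos : ∀ (x : X) (r : ℝ), 0 < r → 0 < μ (Metric.ball x r))
    (hfin : ∀ (x : X) (r : ℝ), 0 < r → μ (Metric.ball x r) < ⊤)
    (κ : ℝ) (hκ : 1 < κ)
    (hup : ∀ r : ℝ, 1 ≤ r → (Metric.ball a (κ * r) \ Metric.ball a r).Nonempty)
    (Cμ : ℝ) (hCμ : 1 < Cμ)
    (hdoub : ∀ (x : X) (r : ℝ), 0 < r →
      μ (Metric.ball x (2 * r)) ≤ ENNReal.ofReal Cμ * μ (Metric.ball x r))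
    (q : ℝ) (hq : 0 < q) :
    (∃ Chat : ℝ, 1 < Chat ∧
      ∀ (x : Option X) (r : ℝ), 0 < r →
        sphMeas a q μ {y : Option X | sphHatDist a x y < 2 * r} ≤
          ENNReal.ofReal Chat * sphMeas a q μ {y : Option X | sphHatDist a x y < r}) ↔
    (∃ s Cs : ℝ, 0 < s ∧ s < q ∧ 0 < Cs ∧
      ∀ r R : ℝ, 1 ≤ r → r ≤ R →
        ENNReal.ofReal (Cs * (r / R) ^ s) * μ (Metric.ball a R) ≤ μ (Metric.ball a r)) := by
  have hD : ∀ K : ℝ, ∃ C : ℝ≥0, ∀ (x : X) (r : ℝ), 0 < r →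
      μ (ball x (K * r)) ≤ C * μ (ball x r) := by
    intro K
    obtain ⟨C, hC⟩ := exists_le_mul_of_doubling Cμ.toNNReal K
    exact ⟨C, fun x => hC (fun r => μ (ball x r))
      (fun r s hrs => measure_mono (ball_subset_ball hrs)) (hdoub x)⟩
  obtain ⟨CA, hA⟩ := exists_sphModel_le_annulus hq hD hκ hup
  constructor
  · rintro ⟨Chat, -, hChat⟩
    obtain ⟨CU, hU⟩ := exists_sphTail_le_of_doubling hq hD hκ hup (C := Chat.toNNReal) hChat
    exact exists_mass_bound hq hfin (by linarith) hU hA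
  · rintro ⟨s, Cs, -, hsq, hCs, h⟩
    have hU := exists_sphTail_le_of_mass_bound hq hsq hCs h
    have hL : ∃ C : ℝ≥0, ∀ t : ℝ, 1 ≤ t → sphModel a q μ t ≤ C * sphTail a q μ t :=
      ⟨CA, fun t ht => (hA t ht).trans (mul_le_mul_right (annulus_le_sphTail _ _) _)⟩
    obtain ⟨C, hC⟩ := exists_sphMeas_sphHatDist_le hq hD hU hL
    refine ⟨C + 2, by linarith [C.2], fun x r hr => (hC x r hr).trans ?_⟩
    gcongr
    rw [← ENNReal.ofReal_coe_nnreal]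
    exact ENNReal.ofReal_le_ofReal (by linarith)
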